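/- Fix β > 0, R > 0 and C > 0. Then there exist positive constants c = c(C, R, β) and N = N(C, R, β) with the following property. Let n ≥ N, let x₀ ∈ [0,1], let (Ω, 𝓐) be a measurable space and (P_f : f ∈ 𝒞^β(R)) a family of probability measures on (Ω, 𝓐) whose squared Hellinger distances satisfy H(P_f, P_g)² = 1 − exp(−(n/8)·‖f − g‖_{L²([0,1])}²) for all f, g ∈ 𝒞^β(R), and let T : Ω → ℝ be any measurable estimator of f(x₀) that is integrable under every P_f. If sup_{f ∈ 𝒞^β(R)} |E_{P_f}[T] − f(x₀)| < (C/n)^{β/(2β+1)}, then sup_{f ∈ 𝒞^β(R)} E_{P_f}[|T − E_{P_f}[T]|] ≥ c·n^{−β/(2β+1)}. -/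

import Mathlib

open MeasureTheory ENNReal

/-- The squared Hellinger distance `H(P,Q)²` between two measures on the same
measurable space, defined via the densities with respect to the dominating measure `P + Q`. -/
noncomputable def sqHellinger {Ω : Type*} [MeasurableSpace Ω] (P Q : Measure Ω) : ℝ :=
  (1 / 2) * ∫ ω, (Real.sqrt ((P.rnDeriv (P + Q) ω).toReal)
    - Real.sqrt ((Q.rnDeriv (P + Q) ω).toReal)) ^ 2 ∂(P + Q)

/-- `⌊β⌋`: the largest integer strictly smaller than `β` (for `β > 0`). -/
noncomputable def lfloor (β : ℝ) : ℕ := ⌈β⌉₊ - 1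

/-- The `β`-Hölder norm of `f` on the domain `[0,1]`, valued in `ℝ≥0∞`:
the sum over `ℓ = 0, …, ⌊β⌋` of the sup-norms of the `ℓ`-th derivatives plus the
`(β - ⌊β⌋)`-Hölder seminorm of the `⌊β⌋`-th derivative. -/
noncomputable def holderNorm (β : ℝ) (f : ℝ → ℝ) : ℝ≥0∞ :=
  (∑ l ∈ Finset.range (lfloor β + 1),
      ⨆ x : Set.Icc (0:ℝ) 1, ENNReal.ofReal |iteratedDerivWithin l f (Set.Icc 0 1) x|)
    + ⨆ p : {y : Set.Icc (0:ℝ) 1 × Set.Icc (0:ℝ) 1 // (y.1 : ℝ) ≠ (y.2 : ℝ)},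
        ENNReal.ofReal
          (|iteratedDerivWithin (lfloor β) f (Set.Icc 0 1) p.1.1
              - iteratedDerivWithin (lfloor β) f (Set.Icc 0 1) p.1.2|
            / |(p.1.1 : ℝ) - (p.1.2 : ℝ)| ^ (β - (lfloor β : ℝ)))

/-- The ball `𝒞^β(R)` of `β`-Hölder smooth functions on `[0,1]` with radius `R`. -/
def holderBall (β R : ℝ) : Set (ℝ → ℝ) :=
  {f | ContDiffOn ℝ (lfloor β) f (Set.Icc 0 1) ∧ holderNorm β f ≤ ENNReal.ofReal R}

/-!
Two hypotheses suffice: the zero function and a bump `f = h ^ β * K ((x - x₀) / h)`, which stays in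
the Hölder ball for every bandwidth `h ≤ 1`. With `n * h ^ (2 * β + 1) = A` constant,
`n * ‖f‖₂²` stays bounded, so the Hellinger affinity of `P f` and `P 0` is bounded below, while
`f x₀` is of the order `(A / n) ^ (β / (2 * β + 1))`. Choosing `A` so that `f x₀` is four times the
allowed bias separates the two means of `T` by twice that bias.

Since `|T - a| + |T - b| ≥ |a - b|`, integrating against the minimum of the two densities bounds
the sum of the two mean absolute deviations below by `|a - b|` times the common mass, and by
Cauchy–Schwarz the common mass is at least half the squared affinity.
-/

open scoped NNReal

section HellingerAffinity

variable {Ω : Type*} [MeasurableSpace Ω]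

lemma sq_integral_sqrt_mul_le {μ : Measure Ω} {u v : Ω → ℝ} (hu : Integrable u μ)
    (hv : Integrable v μ) (hu0 : 0 ≤ u) (hv0 : 0 ≤ v) :
    (∫ ω, √(u ω * v ω) ∂μ) ^ 2 ≤ (∫ ω, u ω ∂μ) * ∫ ω, v ω ∂μ := by
  have memLp_sqrt {w : Ω → ℝ} (hw : Integrable w μ) (hw0 : 0 ≤ w) :
      MemLp (fun ω ↦ √(w ω)) (ENNReal.ofReal 2) μ := by
    rw [ENNReal.ofReal_ofNat, memLp_two_iff_integrable_sq
      (Real.continuous_sqrt.comp_aestronglyMeasurable hw.aestronglyMeasurable)]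
    simpa only [Real.sq_sqrt (hw0 _)] using hw
  have holder := integral_mul_le_Lp_mul_Lq_of_nonneg Real.HolderConjugate.two_two
    (.of_forall fun ω ↦ Real.sqrt_nonneg (u ω)) (.of_forall fun ω ↦ Real.sqrt_nonneg (v ω))
    (memLp_sqrt hu hu0) (memLp_sqrt hv hv0)
  simp only [Real.rpow_two, Real.sq_sqrt (hu0 _), Real.sq_sqrt (hv0 _), ← Real.sqrt_mul (hu0 _),
    ← Real.sqrt_eq_rpow] at holder
  rw [← Real.sqrt_mul (integral_nonneg hu0)] at holder
  exact (Real.le_sqrt (integral_nonneg fun _ ↦ Real.sqrt_nonneg _)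
    (mul_nonneg (integral_nonneg hu0) (integral_nonneg hv0))).1 holder

lemma integral_sub_sqrt_sq {μ : Measure Ω} {u v : Ω → ℝ} (hu : Integrable u μ)
    (hv : Integrable v μ) (hu0 : 0 ≤ u) (hv0 : 0 ≤ v) :
    ∫ ω, (√(u ω) - √(v ω)) ^ 2 ∂μ
      = ∫ ω, u ω ∂μ + ∫ ω, v ω ∂μ - 2 * ∫ ω, √(u ω * v ω) ∂μ := by
  have huv : Integrable (fun ω ↦ √(u ω * v ω)) μ := by
    refine (hu.add hv).mono' (Real.continuous_sqrt.comp_aestronglyMeasurable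
      (hu.aestronglyMeasurable.mul hv.aestronglyMeasurable)) (.of_forall fun ω ↦ ?_)
    rw [Real.norm_of_nonneg (Real.sqrt_nonneg _), Pi.add_apply, Real.sqrt_le_iff]
    have huω : 0 ≤ u ω := hu0 ω
    have hvω : 0 ≤ v ω := hv0 ω
    exact ⟨by positivity, by nlinarith⟩
  have expand (ω : Ω) : (√(u ω) - √(v ω)) ^ 2 = u ω + v ω - 2 * √(u ω * v ω) := by
    rw [Real.sqrt_mul (hu0 ω)]
    linear_combination Real.sq_sqrt (hu0 ω) + Real.sq_sqrt (hv0 ω)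
  simp only [expand]
  rw [integral_sub (by exact hu.add hv) (huv.const_mul 2), integral_add hu hv, integral_const_mul]

lemma sq_integral_sqrt_mul_le_integral_min_mul {μ : Measure Ω} {u v : Ω → ℝ}
    (hu : Integrable u μ) (hv : Integrable v μ) (hu0 : 0 ≤ u) (hv0 : 0 ≤ v) :
    (∫ ω, √(u ω * v ω) ∂μ) ^ 2
      ≤ (∫ ω, min (u ω) (v ω) ∂μ) * (∫ ω, u ω ∂μ + ∫ ω, v ω ∂μ) :=
  calc (∫ ω, √(u ω * v ω) ∂μ) ^ 2
      = (∫ ω, √(min (u ω) (v ω) * max (u ω) (v ω)) ∂μ) ^ 2 := by simp only [min_mul_max]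
    _ ≤ (∫ ω, min (u ω) (v ω) ∂μ) * ∫ ω, max (u ω) (v ω) ∂μ :=
        sq_integral_sqrt_mul_le (hu.inf hv) (hu.sup hv)
          (fun ω ↦ le_min (hu0 ω) (hv0 ω)) (fun ω ↦ le_max_of_le_left (hu0 ω))
    _ ≤ (∫ ω, min (u ω) (v ω) ∂μ) * (∫ ω, u ω ∂μ + ∫ ω, v ω ∂μ) := by
        rw [← integral_add hu hv]
        exact mul_le_mul_of_nonneg_left
          (integral_mono (hu.sup hv) (hu.add hv) fun ω ↦ max_le_add_of_nonneg (hu0 ω) (hv0 ω))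
          (integral_nonneg fun ω ↦ le_min (hu0 ω) (hv0 ω))

/-- The Hellinger affinity `∫ √(p * q)` of two measures, with densities taken with respect to
`P + Q` as in `sqHellinger`. -/
noncomputable def hellingerAffinity (P Q : Measure Ω) : ℝ :=
  ∫ ω, √((P.rnDeriv (P + Q) ω).toReal * (Q.rnDeriv (P + Q) ω).toReal) ∂(P + Q)

/-- The mass `∫ min p q` common to two measures, with densities taken with respect to `P + Q`. -/
noncomputable def commonMass (P Q : Measure Ω) : ℝ :=
  ∫ ω, min (P.rnDeriv (P + Q) ω).toReal (Q.rnDeriv (P + Q) ω).toReal ∂(P + Q)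

variable {P Q : Measure Ω} [IsFiniteMeasure P] [IsFiniteMeasure Q]

lemma sqHellinger_eq_sub_hellingerAffinity :
    sqHellinger P Q = (P.real Set.univ + Q.real Set.univ) / 2 - hellingerAffinity P Q := by
  have hP : P ≪ P + Q := Measure.AbsolutelyContinuous.rfl.add_right Q
  have hQ : Q ≪ P + Q := Measure.AbsolutelyContinuous.rfl.add_right' P
  rw [sqHellinger, integral_sub_sqrt_sq Measure.integrable_toReal_rnDeriv
      Measure.integrable_toReal_rnDeriv (fun _ ↦ toReal_nonneg) (fun _ ↦ toReal_nonneg),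
    Measure.integral_toReal_rnDeriv hP, Measure.integral_toReal_rnDeriv hQ, hellingerAffinity]
  ring

lemma sq_hellingerAffinity_le :
    hellingerAffinity P Q ^ 2 ≤ commonMass P Q * (P.real Set.univ + Q.real Set.univ) := by
  have hP : P ≪ P + Q := Measure.AbsolutelyContinuous.rfl.add_right Q
  have hQ : Q ≪ P + Q := Measure.AbsolutelyContinuous.rfl.add_right' P
  rw [← Measure.integral_toReal_rnDeriv hP, ← Measure.integral_toReal_rnDeriv hQ]
  exact sq_integral_sqrt_mul_le_integral_min_mul Measure.integrable_toReal_rnDeriv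
    Measure.integrable_toReal_rnDeriv (fun _ ↦ toReal_nonneg) (fun _ ↦ toReal_nonneg)

lemma norm_sub_mul_commonMass_le {E : Type*} [NormedAddCommGroup E] {T : Ω → E}
    (hTP : Integrable T P) (hTQ : Integrable T Q) (a b : E) :
    ‖a - b‖ * commonMass P Q ≤ ∫ ω, ‖T ω - a‖ ∂P + ∫ ω, ‖T ω - b‖ ∂Q := by
  have hP : P ≪ P + Q := Measure.AbsolutelyContinuous.rfl.add_right Q
  have hQ : Q ≪ P + Q := Measure.AbsolutelyContinuous.rfl.add_right' P
  have hTa : Integrable (fun ω ↦ (P.rnDeriv (P + Q) ω).toReal • ‖T ω - a‖) (P + Q) :=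
    (integrable_rnDeriv_smul_iff hP).2 (hTP.sub (integrable_const a)).norm
  have hTb : Integrable (fun ω ↦ (Q.rnDeriv (P + Q) ω).toReal • ‖T ω - b‖) (P + Q) :=
    (integrable_rnDeriv_smul_iff hQ).2 (hTQ.sub (integrable_const b)).norm
  rw [← integral_rnDeriv_smul hP, ← integral_rnDeriv_smul hQ, commonMass, ← integral_const_mul,
    ← integral_add hTa hTb]
  refine integral_mono ((Measure.integrable_toReal_rnDeriv.inf
    Measure.integrable_toReal_rnDeriv).const_mul _) (hTa.add hTb) fun ω ↦ ?_
  have triangle : ‖a - b‖ ≤ ‖T ω - a‖ + ‖T ω - b‖ := by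
    rw [norm_sub_rev (T ω) a]
    exact norm_sub_le_norm_sub_add_norm_sub a (T ω) b
  set p := (P.rnDeriv (P + Q) ω).toReal
  set q := (Q.rnDeriv (P + Q) ω).toReal
  calc ‖a - b‖ * min p q
      ≤ (‖T ω - a‖ + ‖T ω - b‖) * min p q :=
        mul_le_mul_of_nonneg_right triangle (le_min ENNReal.toReal_nonneg ENNReal.toReal_nonneg)
    _ = min p q * ‖T ω - a‖ + min p q * ‖T ω - b‖ := by ring
    _ ≤ p * ‖T ω - a‖ + q * ‖T ω - b‖ := by
        gcongr
        exacts [min_le_left p q, min_le_right p q]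

end HellingerAffinity

section MeanAbsDev

variable {Ω : Type*} [MeasurableSpace Ω]

/-- The mean absolute deviation `E|T - E T|` of a real statistic about its mean. -/
noncomputable def meanAbsDev (T : Ω → ℝ) (P : Measure Ω) : ℝ :=
  ∫ ω, |T ω - ∫ x, T x ∂P| ∂P

variable {P Q : Measure Ω} [IsProbabilityMeasure P] [IsProbabilityMeasure Q] {T : Ω → ℝ}

lemma abs_sub_integral_mul_sq_le_add_meanAbsDev (hTP : Integrable T P) (hTQ : Integrable T Q) :
    |∫ ω, T ω ∂P - ∫ ω, T ω ∂Q| * ((1 - sqHellinger P Q) ^ 2 / 2)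
      ≤ meanAbsDev T P + meanAbsDev T Q := by
  have commonMass_ge : (1 - sqHellinger P Q) ^ 2 / 2 ≤ commonMass P Q := by
    have affinity_sq_le := sq_hellingerAffinity_le (P := P) (Q := Q)
    have sqHellinger_eq := sqHellinger_eq_sub_hellingerAffinity (P := P) (Q := Q)
    rw [probReal_univ, probReal_univ] at affinity_sq_le sqHellinger_eq
    have affinity_eq : 1 - sqHellinger P Q = hellingerAffinity P Q := by linarith
    rw [affinity_eq]
    linarith
  exact (mul_le_mul_of_nonneg_left commonMass_ge (abs_nonneg _)).trans
    (norm_sub_mul_commonMass_le hTP hTQ _ _)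

lemma le_meanAbsDev_or_le_meanAbsDev_of_bias_le {θ₁ θ₂ B ρ : ℝ} (hTP : Integrable T P)
    (hTQ : Integrable T Q) (hbiasP : |∫ ω, T ω ∂P - θ₁| ≤ B) (hbiasQ : |∫ ω, T ω ∂Q - θ₂| ≤ B)
    (hgap : 4 * B ≤ θ₁ - θ₂) (hρ : 0 ≤ ρ) (hH : ρ ≤ 1 - sqHellinger P Q) :
    B * ρ ^ 2 / 2 ≤ meanAbsDev T P ∨ B * ρ ^ 2 / 2 ≤ meanAbsDev T Q := by
  have mean_gap : 2 * B ≤ |∫ ω, T ω ∂P - ∫ ω, T ω ∂Q| := by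
    have := abs_le.1 hbiasP
    have := abs_le.1 hbiasQ
    exact le_abs.2 (.inl (by linarith))
  have sum_ge : B * ρ ^ 2 ≤ meanAbsDev T P + meanAbsDev T Q :=
    calc B * ρ ^ 2 = 2 * B * (ρ ^ 2 / 2) := by ring
      _ ≤ |∫ ω, T ω ∂P - ∫ ω, T ω ∂Q| * ((1 - sqHellinger P Q) ^ 2 / 2) := by gcongr
      _ ≤ _ := abs_sub_integral_mul_sq_le_add_meanAbsDev hTP hTQ
  by_contra! hlt
  linarith

end MeanAbsDev

section HolderNorm

lemma lfloor_lt {β : ℝ} (hβ : 0 < β) : (lfloor β : ℝ) < β :=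
  Nat.lt_ceil.1 (Nat.sub_one_lt (Nat.ceil_pos.2 hβ).ne')

lemma le_lfloor_add_one (β : ℝ) : β ≤ lfloor β + 1 := by
  have : ⌈β⌉₊ ≤ lfloor β + 1 := by unfold lfloor; omega
  exact_mod_cast (Nat.le_ceil β).trans (Nat.cast_le.2 this)

lemma holderNorm_le {β A B : ℝ} {f : ℝ → ℝ} (hA : 0 ≤ A) (hB : 0 ≤ B)
    (hderiv : ∀ l ≤ lfloor β, ∀ x ∈ Set.Icc (0 : ℝ) 1,
      |iteratedDerivWithin l f (Set.Icc 0 1) x| ≤ A)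
    (hholder : ∀ x ∈ Set.Icc (0 : ℝ) 1, ∀ y ∈ Set.Icc (0 : ℝ) 1,
      |iteratedDerivWithin (lfloor β) f (Set.Icc 0 1) x
          - iteratedDerivWithin (lfloor β) f (Set.Icc 0 1) y|
        ≤ B * |x - y| ^ (β - lfloor β)) :
    holderNorm β f ≤ ENNReal.ofReal ((lfloor β + 1) * A + B) := by
  have sum_le : ∑ l ∈ Finset.range (lfloor β + 1),
      ⨆ x : Set.Icc (0 : ℝ) 1, ENNReal.ofReal |iteratedDerivWithin l f (Set.Icc 0 1) x|
        ≤ ENNReal.ofReal ((lfloor β + 1) * A) := by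
    refine (Finset.sum_le_card_nsmul _ _ (ENNReal.ofReal A) fun l hl ↦ iSup_le fun ⟨x, hx⟩ ↦
      ENNReal.ofReal_le_ofReal (hderiv l (Finset.mem_range_succ_iff.1 hl) x hx)).trans_eq ?_
    rw [Finset.card_range, ← ENNReal.ofReal_nsmul, nsmul_eq_mul, Nat.cast_add_one]
  rw [ENNReal.ofReal_add (by positivity) hB]
  refine add_le_add sum_le (iSup_le fun ⟨⟨x, y⟩, hxy⟩ ↦ ENNReal.ofReal_le_ofReal ?_)
  have : 0 < |(x : ℝ) - y| := abs_pos.2 (sub_ne_zero.2 hxy)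
  exact (div_le_iff₀ (by positivity)).2 (hholder x x.2 y y.2)

lemma zero_mem_holderBall (β R : ℝ) : (0 : ℝ → ℝ) ∈ holderBall β R := by
  refine ⟨contDiffOn_const, (holderNorm_le le_rfl le_rfl ?_ ?_).trans ?_⟩ <;> simp

end HolderNorm

lemma holderWith_of_nnnorm_le_of_lipschitzWith {X E : Type*} [PseudoEMetricSpace X]
    [SeminormedAddCommGroup E] {f : X → E} {M γ : ℝ≥0} (hbound : ∀ x, ‖f x‖₊ ≤ M)
    (hlip : LipschitzWith M f) (hγ : γ ≤ 1) : HolderWith (2 * M) γ f := by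
  have holderWith_zero : HolderWith (2 * M) 0 f := fun x y ↦ by
    rw [NNReal.coe_zero, ENNReal.rpow_zero, mul_one, edist_nndist, ENNReal.coe_le_coe,
      nndist_eq_nnnorm, two_mul]
    exact (nnnorm_sub_le _ _).trans (add_le_add (hbound x) (hbound y))
  have hM : max (2 * M) M = 2 * M := max_eq_left (le_mul_of_one_le_left' one_le_two)
  exact hM ▸ holderWith_zero.of_le_of_le hlip.holderWith zero_le hγ

lemma exists_nnnorm_iteratedDeriv_le {E : Type*} [NormedAddCommGroup E] [NormedSpace ℝ E]
    {φ : ℝ → E} {k : ℕ} (hφ : ContDiff ℝ k φ) (hsupp : HasCompactSupport φ) :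
    ∃ M : ℝ≥0, ∀ l ≤ k, ∀ x, ‖iteratedDeriv l φ x‖₊ ≤ M := by
  have bound (l : ℕ) (hl : l ≤ k) : ∃ M : ℝ≥0, ∀ x, ‖iteratedDeriv l φ x‖₊ ≤ M := by
    obtain ⟨M, hM⟩ := (hsupp.iteratedFDeriv (𝕜 := ℝ) l).exists_bound_of_continuous
      (hφ.continuous_iteratedFDeriv (by exact_mod_cast hl))
    refine ⟨M.toNNReal, fun x ↦ NNReal.le_toNNReal_of_coe_le ?_⟩
    rw [coe_nnnorm, ← norm_iteratedFDeriv_eq_norm_iteratedDeriv]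
    exact hM x
  choose! M hM using bound
  exact ⟨(Finset.range (k + 1)).sup M, fun l hl x ↦
    (hM l hl x).trans (Finset.le_sup (Finset.mem_range_succ_iff.2 hl))⟩

/-- The kernel `K` centred at `x₀` with bandwidth `h`, with height scaled by `h ^ β` so that its
`β`-Hölder seminorm does not depend on `h`. -/
noncomputable def rescaledKernel (β h x₀ : ℝ) (K : ℝ → ℝ) (x : ℝ) : ℝ :=
  h ^ β * K (h⁻¹ * (x - x₀))

section RescaledKernel

variable {β h x₀ : ℝ} {K : ℝ → ℝ}

lemma rescaledKernel_self : rescaledKernel β h x₀ K x₀ = h ^ β * K 0 := by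
  rw [rescaledKernel, sub_self, mul_zero]

lemma contDiff_rescaledKernel {m : WithTop ℕ∞} (hK : ContDiff ℝ m K) :
    ContDiff ℝ m (rescaledKernel β h x₀ K) := by
  unfold rescaledKernel
  fun_prop

lemma iteratedDeriv_rescaledKernel {l : ℕ} (hK : ContDiff ℝ l K) (hh : 0 < h) (x : ℝ) :
    iteratedDeriv l (rescaledKernel β h x₀ K) x
      = h ^ (β - l) * iteratedDeriv l K (h⁻¹ * (x - x₀)) := by
  have scale := congrFun (iteratedDeriv_comp_const_mul hK h⁻¹) (x - x₀)
  have shift := congrFun (iteratedDeriv_comp_sub_const l (fun y ↦ K (h⁻¹ * y)) x₀) x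
  unfold rescaledKernel
  rw [iteratedDeriv_const_mul_field, shift, scale, Real.rpow_sub hh, Real.rpow_natCast, inv_pow]
  ring

lemma abs_iteratedDeriv_rescaledKernel_le {l : ℕ} {M : ℝ≥0} (hK : ContDiff ℝ l K) (hh : 0 < h)
    (hh1 : h ≤ 1) (hl : l ≤ β) (hM : ∀ x, ‖iteratedDeriv l K x‖₊ ≤ M) (x : ℝ) :
    |iteratedDeriv l (rescaledKernel β h x₀ K) x| ≤ M := by
  rw [iteratedDeriv_rescaledKernel hK hh, abs_mul, abs_of_nonneg (by positivity)]
  exact (mul_le_of_le_one_left (abs_nonneg _)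
    (Real.rpow_le_one hh.le hh1 (sub_nonneg.2 hl))).trans (hM _)

lemma abs_sub_iteratedDeriv_rescaledKernel_le {l : ℕ} {B γ : ℝ≥0} (hK : ContDiff ℝ l K)
    (hh : 0 < h) (hγ : γ = β - l) (hB : HolderWith B γ (iteratedDeriv l K)) (x y : ℝ) :
    |iteratedDeriv l (rescaledKernel β h x₀ K) x - iteratedDeriv l (rescaledKernel β h x₀ K) y|
      ≤ B * |x - y| ^ (β - l) := by
  have dist_eq : dist (h⁻¹ * (x - x₀)) (h⁻¹ * (y - x₀)) = h⁻¹ * |x - y| := by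
    rw [Real.dist_eq, ← mul_sub, sub_sub_sub_cancel_right, abs_mul, abs_of_pos (inv_pos.2 hh)]
  rw [iteratedDeriv_rescaledKernel hK hh, iteratedDeriv_rescaledKernel hK hh, ← mul_sub, abs_mul,
    abs_of_nonneg (by positivity)]
  calc h ^ (β - l)
        * |iteratedDeriv l K (h⁻¹ * (x - x₀)) - iteratedDeriv l K (h⁻¹ * (y - x₀))|
      ≤ h ^ (β - l) * (B * (h⁻¹ * |x - y|) ^ (β - l)) := by
        rw [← dist_eq, ← hγ]
        gcongr
        exact hB.dist_le _ _
    _ = B * |x - y| ^ (β - l) := by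
        rw [Real.mul_rpow (by positivity) (abs_nonneg _), Real.inv_rpow hh.le]
        field_simp

lemma holderNorm_rescaledKernel_le {M : ℝ≥0} (hβ : 0 < β) (hK : ContDiff ℝ (lfloor β + 1 : ℕ) K)
    (hM : ∀ l ≤ lfloor β + 1, ∀ x, ‖iteratedDeriv l K x‖₊ ≤ M) (hh : 0 < h) (hh1 : h ≤ 1) :
    holderNorm β (rescaledKernel β h x₀ K) ≤ ENNReal.ofReal ((lfloor β + 3) * M) := by
  have contDiff_of_le {l : ℕ} (hl : l ≤ lfloor β) : ContDiff ℝ l K :=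
    hK.of_le (by exact_mod_cast hl.trans (Nat.le_succ _))
  have within {l : ℕ} (hl : l ≤ lfloor β) {x : ℝ} (hx : x ∈ Set.Icc (0 : ℝ) 1) :
      iteratedDerivWithin l (rescaledKernel β h x₀ K) (Set.Icc 0 1) x
        = iteratedDeriv l (rescaledKernel β h x₀ K) x :=
    iteratedDerivWithin_eq_iteratedDeriv (uniqueDiffOn_Icc zero_lt_one)
      (contDiff_rescaledKernel (contDiff_of_le hl)).contDiffAt hx
  have lipschitz : LipschitzWith M (iteratedDeriv (lfloor β) K) :=
    lipschitzWith_of_nnnorm_deriv_le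
      (hK.differentiable_iteratedDeriv _ (by exact_mod_cast Nat.lt_succ_self _))
      (fun x ↦ by rw [← iteratedDeriv_succ]; exact hM _ le_rfl x)
  have holder : HolderWith (2 * M) (β - lfloor β).toNNReal (iteratedDeriv (lfloor β) K) :=
    holderWith_of_nnnorm_le_of_lipschitzWith (hM _ (Nat.le_succ _)) lipschitz
      (Real.toNNReal_le_one.2 (by linarith [le_lfloor_add_one β]))
  calc holderNorm β (rescaledKernel β h x₀ K)
      ≤ ENNReal.ofReal ((lfloor β + 1) * M + (2 * M : ℝ≥0)) := by
        refine holderNorm_le M.2 (2 * M).2 (fun l hl x hx ↦ ?_) (fun x hx y hy ↦ ?_)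
        · rw [within hl hx]
          have hlβ : (l : ℝ) ≤ β := (Nat.cast_le.2 hl).trans (lfloor_lt hβ).le
          exact abs_iteratedDeriv_rescaledKernel_le (contDiff_of_le hl) hh hh1 hlβ
            (hM l (hl.trans (Nat.le_succ _))) x
        · rw [within le_rfl hx, within le_rfl hy]
          exact abs_sub_iteratedDeriv_rescaledKernel_le (contDiff_of_le le_rfl) hh
            (Real.coe_toNNReal _ (sub_nonneg.2 (lfloor_lt hβ).le)) holder x y
    _ = ENNReal.ofReal ((lfloor β + 3) * M) := by
        push_cast
        ring_nf

lemma exists_kernel_rescaledKernel_mem_holderBall {R : ℝ} (hβ : 0 < β) (hR : 0 < R) :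
    ∃ K : ℝ → ℝ, 0 < K 0 ∧ (Integrable fun x ↦ K x ^ 2) ∧
      ∀ h, 0 < h → h ≤ 1 → ∀ x₀, rescaledKernel β h x₀ K ∈ holderBall β R := by
  let φ : ContDiffBump (0 : ℝ) := ⟨1, 2, one_pos, one_lt_two⟩
  have hφ0 : φ 0 = 1 := φ.one_of_mem_closedBall (by simp [φ])
  obtain ⟨M, hM⟩ := exists_nnnorm_iteratedDeriv_le (k := lfloor β + 1) φ.contDiff
    φ.hasCompactSupport
  obtain ⟨ε, hε, hεR⟩ := exists_pos_mul_lt hR ((lfloor β + 3) * M)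
  lift ε to ℝ≥0 using hε.le
  have hK (m : ℕ) : ContDiff ℝ m ((ε : ℝ) • ⇑φ) := φ.contDiff.const_smul (ε : ℝ)
  have hK_supp : HasCompactSupport ((ε : ℝ) • ⇑φ) := φ.hasCompactSupport.smul_left
  have hKM : ∀ l ≤ lfloor β + 1, ∀ x, ‖iteratedDeriv l ((ε : ℝ) • ⇑φ) x‖₊ ≤ M * ε := by
    intro l hl x
    rw [iteratedDeriv_const_smul_field, nnnorm_smul, NNReal.nnnorm_eq, mul_comm]
    exact mul_le_mul_left (hM l hl x) ε
  refine ⟨(ε : ℝ) • ⇑φ, by simpa [hφ0] using hε,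
    ((hK 0).continuous.memLp_of_hasCompactSupport hK_supp).integrable_sq,
    fun h hh hh1 x₀ ↦ ⟨(contDiff_rescaledKernel (hK _)).contDiffOn, ?_⟩⟩
  refine (holderNorm_rescaledKernel_le hβ (hK _) hKM hh hh1).trans (ENNReal.ofReal_le_ofReal ?_)
  rw [NNReal.coe_mul, ← mul_assoc]
  exact hεR.le

lemma sq_rescaledKernel (hh : 0 < h) (x : ℝ) :
    rescaledKernel β h x₀ K x ^ 2 = h ^ (2 * β) * K (h⁻¹ * (x - x₀)) ^ 2 := by
  rw [rescaledKernel, mul_pow, mul_comm 2 β, Real.rpow_mul hh.le, Real.rpow_two]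

lemma integral_sq_rescaledKernel (hh : 0 < h) :
    ∫ x, rescaledKernel β h x₀ K x ^ 2 = h ^ (2 * β + 1) * ∫ x, K x ^ 2 := by
  simp only [sq_rescaledKernel hh]
  rw [integral_const_mul, integral_sub_right_eq_self (fun x ↦ K (h⁻¹ * x) ^ 2) x₀,
    Measure.integral_comp_inv_mul_left (fun x ↦ K x ^ 2), abs_of_pos hh, smul_eq_mul, ← mul_assoc,
    Real.rpow_add_one hh.ne']

lemma setIntegral_sq_rescaledKernel_le (hK : Integrable fun x ↦ K x ^ 2) (hh : 0 < h)
    (s : Set ℝ) :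
    ∫ x in s, rescaledKernel β h x₀ K x ^ 2 ≤ h ^ (2 * β + 1) * ∫ x, K x ^ 2 := by
  have integrable : Integrable fun x ↦ rescaledKernel β h x₀ K x ^ 2 := by
    simp only [sq_rescaledKernel hh]
    exact ((hK.comp_mul_left' (inv_ne_zero hh.ne')).comp_sub_right x₀).const_mul _
  rw [← integral_sq_rescaledKernel hh]
  exact setIntegral_le_integral integrable (.of_forall fun _ ↦ sq_nonneg _)

end RescaledKernel

lemma exists_bandwidth {β C κ : ℝ} (hβ : 0 < β) (hC : 0 < C) (hκ : 0 < κ) :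
    ∃ A > 0, ∀ n ≥ A, ∃ h, 0 < h ∧ h ≤ 1 ∧ n * h ^ (2 * β + 1) = A ∧
      h ^ β = κ * (C / n) ^ (β / (2 * β + 1)) := by
  refine ⟨C * κ ^ ((2 * β + 1) / β), by positivity, fun n hn ↦ ?_⟩
  set A := C * κ ^ ((2 * β + 1) / β) with hA
  have hn0 : 0 < n := lt_of_lt_of_le (by positivity) hn
  have hAn : 0 ≤ A / n := by positivity
  refine ⟨(A / n) ^ (1 / (2 * β + 1)), by positivity,
    Real.rpow_le_one hAn ((div_le_one hn0).2 hn) (by positivity), ?_, ?_⟩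
  · rw [← Real.rpow_mul hAn, one_div_mul_cancel (by positivity), Real.rpow_one,
      mul_div_cancel₀ _ hn0.ne']
  · have hAC : A / n = κ ^ ((2 * β + 1) / β) * (C / n) := by rw [hA]; ring
    rw [← Real.rpow_mul hAn, one_div_mul_eq_div, hAC,
      Real.mul_rpow (by positivity) (by positivity), ← Real.rpow_mul hκ.le,
      div_mul_div_cancel₀ hβ.ne', div_self (by positivity), Real.rpow_one]

/- The suprema over the Hölder ball in the hypothesis and the conclusion are
formalized pointwise resp. existentially. -/
theorem stmt13 (β R C : ℝ) (hβ : 0 < β) (hR : 0 < R) (hC : 0 < C) :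
    ∃ c N : ℝ, 0 < c ∧ 0 < N ∧
      ∀ (n : ℝ), N ≤ n →
        ∀ x₀ ∈ Set.Icc (0:ℝ) 1,
          ∀ (Ω : Type) (_ : MeasurableSpace Ω) (P : (ℝ → ℝ) → Measure Ω),
            (∀ f ∈ holderBall β R, IsProbabilityMeasure (P f)) →
            (∀ f ∈ holderBall β R, ∀ g ∈ holderBall β R,
              sqHellinger (P f) (P g)
                = 1 - Real.exp (-(n / 8) * ∫ x in Set.Icc (0:ℝ) 1, (f x - g x) ^ 2)) →
            ∀ T : Ω → ℝ, Measurable T →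
              (∀ f ∈ holderBall β R, Integrable T (P f)) →
              (∀ f ∈ holderBall β R,
                |(∫ ω, T ω ∂(P f)) - f x₀| < (C / n) ^ (β / (2 * β + 1))) →
              ∃ f ∈ holderBall β R,
                c * n ^ (-(β / (2 * β + 1))) ≤ ∫ ω, |T ω - ∫ x, T x ∂(P f)| ∂(P f) := by
  obtain ⟨K, hK0, hK_sq, hK_mem⟩ := exists_kernel_rescaledKernel_mem_holderBall hβ hR
  obtain ⟨A, hA, exists_h⟩ := exists_bandwidth hβ hC (κ := 4 / K 0) (by positivity)
  set r := β / (2 * β + 1)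
  set ρ := Real.exp (-(A / 8) * ∫ x, K x ^ 2)
  refine ⟨C ^ r * ρ ^ 2 / 2, A, by positivity, hA, fun n hn x₀ _ Ω _ P hP hH T _ hT hbias ↦ ?_⟩
  obtain ⟨h, hh, hh1, hnh, hhβ⟩ := exists_h n hn
  have hn0 : 0 < n := hA.trans_le hn
  set f := rescaledKernel β h x₀ K
  have hf : f ∈ holderBall β R := hK_mem h hh hh1 x₀
  have h0 : 0 ∈ holderBall β R := zero_mem_holderBall β R
  have := hP f hf
  have := hP 0 h0
  have gap : 4 * (C / n) ^ r = f x₀ - (0 : ℝ → ℝ) x₀ := by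
    rw [show f x₀ = h ^ β * K 0 from rescaledKernel_self, hhβ, Pi.zero_apply]
    field_simp
    ring
  have affinity_ge : ρ ≤ 1 - sqHellinger (P f) (P 0) := by
    rw [hH f hf 0 h0, _root_.sub_sub_cancel, Real.exp_le_exp, ← hnh]
    simp only [Pi.zero_apply, sub_zero]
    nlinarith [setIntegral_sq_rescaledKernel_le (β := β) (x₀ := x₀) hK_sq hh (Set.Icc 0 1)]
  have rate : C ^ r * ρ ^ 2 / 2 * n ^ (-r) = (C / n) ^ r * ρ ^ 2 / 2 := by
    rw [Real.div_rpow hC.le hn0.le, Real.rpow_neg hn0.le]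
    ring
  rw [rate]
  rcases le_meanAbsDev_or_le_meanAbsDev_of_bias_le (hT f hf) (hT 0 h0) (hbias f hf).le
    (hbias 0 h0).le gap.le (Real.exp_nonneg _) affinity_ge with hmad | hmad
  exacts [⟨f, hf, hmad⟩, ⟨0, h0, hmad⟩]
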